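/- arXiv:1604.04420 — 6 statements merged into one kernel-verified Lean document; each statement's English description precedes it below -/
import Mathlib

section
/- Let $G,\widehat G,R,U$ be $m\times m$ real matrices such that $U-I$ is invertible, the series $W=\sum_{j=0}^{\infty}G^{j}(U-I)^{-1}R^{j}$ converges (i.e. the family $j\mapsto G^{j}(U-I)^{-1}R^{j}$ has sum $W$), and $WR=\widehat G W$. Then the matrices $W$ and $G\widehat G-I$ are both invertible and $W^{-1}=(I-U)(G\widehat G-I)$. -/
open Matrix

/-- Lemma 2.2 (Lemma `LemmaInVDbl`): if `U - I` is invertible, the series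
`W = ∑_{j≥0} G^j (U - I)⁻¹ R^j` converges and `W R = Ĝ W`, then `W` and
`G Ĝ - I` are invertible and `W⁻¹ = (I - U)(G Ĝ - I)`. -/
theorem poisson_qbd_W_invertible {m : ℕ}
    (G Ghat R U W : Matrix (Fin m) (Fin m) ℝ)
    (hU : IsUnit (U - 1))
    (hW : HasSum (fun j : ℕ => G ^ j * (U - 1)⁻¹ * R ^ j) W)
    (hWR : W * R = Ghat * W) :
    IsUnit W ∧ IsUnit (G * Ghat - 1) ∧ W⁻¹ = (1 - U) * (G * Ghat - 1) := by
  have h1 : HasSum (fun j : ℕ => G ^ (j + 1) * (U - 1)⁻¹ * R ^ (j + 1)) (G * W * R) := by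
    have h := (hW.mul_left G).mul_right R
    have e : (fun j : ℕ => G ^ (j + 1) * (U - 1)⁻¹ * R ^ (j + 1)) =
        fun j : ℕ => G * (G ^ j * (U - 1)⁻¹ * R ^ j) * R := by
      funext j
      rw [pow_succ' G, pow_succ R]
      simp only [Matrix.mul_assoc]
    rw [e]
    exact h
  have h2 : W = (U - 1)⁻¹ + G * W * R := by
    have h := hW.unique ((hasSum_nat_add_iff' 1).mp (by simpa using h1 :
      HasSum (fun j : ℕ => G ^ (j + 1) * (U - 1)⁻¹ * R ^ (j + 1))
        (((U - 1)⁻¹ + G * W * R) - ∑ i ∈ Finset.range 1, G ^ i * (U - 1)⁻¹ * R ^ i)))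
    exact h
  have h3 : (1 - G * Ghat) * W = (U - 1)⁻¹ := by
    rw [Matrix.mul_assoc, hWR] at h2
    rw [sub_mul, one_mul, Matrix.mul_assoc]
    exact sub_eq_of_eq_add h2
  have h4 : ((1 - U) * (G * Ghat - 1)) * W = 1 := by
    have h5 : (1 - U) * (G * Ghat - 1) = (U - 1) * (1 - G * Ghat) := by noncomm_ring
    rw [h5, Matrix.mul_assoc, h3]
    exact Matrix.mul_nonsing_inv _ ((Matrix.isUnit_iff_isUnit_det _).mp hU)
  have h6 : W * ((1 - U) * (G * Ghat - 1)) = 1 := mul_eq_one_comm.mp h4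
  refine ⟨IsUnit.of_mul_eq_one _ h6, ?_, Matrix.inv_eq_right_inv h6⟩
  rw [← Matrix.mul_assoc] at h6
  exact IsUnit.of_mul_eq_one _ (mul_eq_one_comm.mp h6)
end

section
/- Let $A_1,G,\widehat G,R,U$ be $m\times m$ real matrices such that $U-I$ is invertible, $R=A_{1}(I-U)^{-1}$, the series $W=\sum_{j=0}^{\infty}G^{j}(U-I)^{-1}R^{j}$ converges, and $WR=\widehat G W$. Then $W A_{1}(G\widehat G-I)=\widehat G$. -/
open Matrix

/-- Lemma 2.3: if `U - I` is invertible, `R = A₁ (I - U)⁻¹`, the series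
`W = ∑_{j≥0} G^j (U - I)⁻¹ R^j` converges and `W R = Ĝ W`, then
`W A₁ (G Ĝ - I) = Ĝ`. -/
theorem poisson_qbd_W_A1 {m : ℕ}
    (A1 G Ghat R U W : Matrix (Fin m) (Fin m) ℝ)
    (hU : IsUnit (U - 1))
    (hR : R = A1 * (1 - U)⁻¹)
    (hW : HasSum (fun j : ℕ => G ^ j * (U - 1)⁻¹ * R ^ j) W)
    (hWR : W * R = Ghat * W) :
    W * A1 * (G * Ghat - 1) = Ghat := by
  have hd : IsUnit (U - 1).det := (Matrix.isUnit_iff_isUnit_det _).1 hU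
  have hd' : IsUnit (1 - U).det := by
    rw [← Matrix.isUnit_iff_isUnit_det, ← neg_sub]
    exact hU.neg
  have h1 : HasSum (fun j : ℕ => G ^ (j + 1) * (U - 1)⁻¹ * R ^ (j + 1)) (G * W * R) := by
    have h := (hW.mul_left G).mul_right R
    have e : (fun j : ℕ => G ^ (j + 1) * (U - 1)⁻¹ * R ^ (j + 1))
        = fun j : ℕ => G * (G ^ j * (U - 1)⁻¹ * R ^ j) * R := by
      funext j
      rw [pow_succ' G, pow_succ R]
      simp only [mul_assoc]
    rw [e]
    exact h
  have h2 : W = (U - 1)⁻¹ + G * W * R := by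
    have h := (hasSum_nat_add_iff' (f := fun j : ℕ => G ^ j * (U - 1)⁻¹ * R ^ j) 1).2 hW
    have h' := h1.unique h
    simp only [Finset.sum_range_one, pow_zero, one_mul, mul_one] at h'
    rw [h']
    abel
  have h3 : (1 - G * Ghat) * W = (U - 1)⁻¹ := by
    rw [mul_assoc G, hWR] at h2
    rw [sub_mul, one_mul, mul_assoc, sub_eq_iff_eq_add]
    exact h2
  have h4 : (1 - G * Ghat) * (W * (U - 1)) = 1 := by
    rw [← mul_assoc, h3, Matrix.nonsing_inv_mul _ hd]
  have h5 : W * (U - 1) * (1 - G * Ghat) = 1 := mul_eq_one_comm.1 h4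
  have h6 : R * (1 - U) = A1 := by
    rw [hR, mul_assoc, Matrix.nonsing_inv_mul _ hd', mul_one]
  calc W * A1 * (G * Ghat - 1) = (W * R) * (1 - U) * (G * Ghat - 1) := by
        rw [← h6]; simp only [mul_assoc]
    _ = Ghat * (W * (U - 1) * (1 - G * Ghat)) := by
        rw [hWR]; noncomm_ring
    _ = Ghat := by rw [h5, mul_one]
end

section
/- Let $A_1,G,Y,M,W$ be $m\times m$ real matrices such that $M$ and $W$ are invertible and $W(A_1GM-Y)=M$. Then the $2m\times 2m$ block matrix $\Gamma=\begin{bmatrix}I& M\\ A_1G& Y\end{bmatrix}$ is invertible and $\Gamma\begin{bmatrix}W\\ -M^{-1}W\end{bmatrix}=\begin{bmatrix}0\\ I\end{bmatrix}$, i.e. the last $m$ columns of $\Gamma^{-1}$ are $\begin{bmatrix}W\\ -M^{-1}W\end{bmatrix}$. -/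
open Matrix

/-- The computational core of Theorem 3.5: if `W (A₁ G M - Y) = M` with `M, W`
invertible, then `Γ = [[I, M], [A₁ G, Y]]` is invertible and the last `m`
columns of `Γ⁻¹` are `[W; -M⁻¹ W]`. -/
theorem poisson_qbd_resolvent_Gamma {m : ℕ}
    (A1 G Y M W : Matrix (Fin m) (Fin m) ℝ)
    (hM : IsUnit M) (hW : IsUnit W)
    (h : W * (A1 * G * M - Y) = M) :
    IsUnit (Matrix.fromBlocks 1 M (A1 * G) Y) ∧
    Matrix.fromBlocks 1 M (A1 * G) Y * Matrix.fromRows W (-(M⁻¹ * W)) =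
      Matrix.fromRows (0 : Matrix (Fin m) (Fin m) ℝ) (1 : Matrix (Fin m) (Fin m) ℝ) := by
  have hMd : IsUnit M.det := (Matrix.isUnit_iff_isUnit_det M).1 hM
  constructor
  · have hS : IsUnit (A1 * G * M - Y) := by
      rw [← h, Matrix.isUnit_iff_isUnit_det, Matrix.det_mul] at hM
      exact (Matrix.isUnit_iff_isUnit_det _).2 (isUnit_of_mul_isUnit_right hM)
    rw [Matrix.isUnit_iff_isUnit_det, Matrix.det_fromBlocks_one₁₁,
      ← Matrix.isUnit_iff_isUnit_det, ← neg_sub]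
    exact hS.neg
  · have h1 : W * ((A1 * G * M - Y) * M⁻¹) = 1 := by
      rw [← Matrix.mul_assoc, h, Matrix.mul_nonsing_inv _ hMd]
    have h2 : (A1 * G * M - Y) * M⁻¹ * W = 1 := mul_eq_one_comm.1 h1
    have h3 : M * (M⁻¹ * W) = W := Matrix.mul_nonsing_inv_cancel_left _ _ hMd
    rw [Matrix.fromBlocks_mul_fromRows]
    congr 1
    · rw [Matrix.mul_neg, h3, Matrix.one_mul, add_neg_cancel]
    · rw [← h2, Matrix.mul_assoc _ M⁻¹ W, Matrix.sub_mul, Matrix.mul_assoc (A1 * G) M, h3,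
        Matrix.mul_neg, sub_eq_add_neg]
end

section
/- Let $B,A_1,G,\widehat G,W,R$ be $m\times m$ real matrices with $W$ invertible, $WA_1(G\widehat G-I)=\widehat G$, and let $\pi_0\in\mathbb{R}^m$ satisfy $\pi_0^T(I-B-A_1G)=0$. Let $L$ be $m\times p$ and $V_1$ invertible $p\times p$ with $\widehat GL=LV_1$. Let $g_k\in\mathbb{R}^m$ ($k\ge 0$), $\sigma_1\in\mathbb{R}^m$ and $y^*\in\mathbb{R}^p$ be such that the series $\sum_{k=0}^{\infty}R^kg_k$ converges and $\sum_{k=0}^{\infty}R^kg_k= g_0-W^{-1}\widehat G\sigma_1-W^{-1}\widehat GLV_1^{-1}y^*$. Then for every $y\in\mathbb{R}^p$ the solvability condition $\pi_0^T\big((B-I)\widehat G+A_1\big)(\sigma_1+LV_1^{-1}y)+\pi_0^Tg_0=0$ holds if and only if $\pi_0^TW^{-1}Ly=\pi_0^T\sum_{k=0}^{\infty}R^kg_k+\pi_0^TW^{-1}Ly^*$. -/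
open Matrix

/-- The solvability constraint of Theorem 4.3 (positive recurrent case): the
condition `π₀ᵀ ((B - I) Ĝ + A₁)(σ₁ + L V₁⁻¹ y) + π₀ᵀ g₀ = 0` holds iff
`π₀ᵀ W⁻¹ L y = π₀ᵀ ∑_{k≥0} R^k g_k + π₀ᵀ W⁻¹ L y*`. -/
theorem poisson_qbd_solvability_constraint {m p : ℕ}
    (B A1 G Ghat W R : Matrix (Fin m) (Fin m) ℝ)
    (hW : IsUnit W) (hWA : W * A1 * (G * Ghat - 1) = Ghat)
    (π0 : Fin m → ℝ) (hπ : π0 ᵥ* (1 - B - A1 * G) = 0)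
    (L : Matrix (Fin m) (Fin p) ℝ) (V1 : Matrix (Fin p) (Fin p) ℝ)
    (hV1 : IsUnit V1) (hGL : Ghat * L = L * V1)
    (g : ℕ → Fin m → ℝ) (σ1 : Fin m → ℝ) (ystar : Fin p → ℝ)
    (s : Fin m → ℝ) (hs : HasSum (fun k : ℕ => (R ^ k).mulVec (g k)) s)
    (hrel : s = g 0 - (W⁻¹ * Ghat).mulVec σ1 - (W⁻¹ * Ghat * L * V1⁻¹).mulVec ystar) :
    ∀ y : Fin p → ℝ,
      (π0 ⬝ᵥ ((B - 1) * Ghat + A1).mulVec (σ1 + (L * V1⁻¹).mulVec y) + π0 ⬝ᵥ g 0 = 0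
      ↔ π0 ⬝ᵥ (W⁻¹ * L).mulVec y = π0 ⬝ᵥ s + π0 ⬝ᵥ (W⁻¹ * L).mulVec ystar) := by
  intro y
  have hWd : IsUnit W.det := (Matrix.isUnit_iff_isUnit_det W).mp hW
  have hVd : IsUnit V1.det := (Matrix.isUnit_iff_isUnit_det V1).mp hV1
  have h1 : W⁻¹ * Ghat = A1 * (G * Ghat - 1) := by
    conv_lhs => rw [← hWA]
    rw [Matrix.mul_assoc W, Matrix.nonsing_inv_mul_cancel_left _ _ hWd]
  have h2 : (B - 1) * Ghat + A1 = -((1 - B - A1 * G) * Ghat) - W⁻¹ * Ghat := by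
    rw [h1]; noncomm_ring
  have h3 : ∀ v, π0 ⬝ᵥ ((B - 1) * Ghat + A1).mulVec v = -(π0 ⬝ᵥ (W⁻¹ * Ghat).mulVec v) := by
    intro v
    rw [h2, Matrix.sub_mulVec, Matrix.neg_mulVec, dotProduct_sub, dotProduct_neg,
      ← Matrix.mulVec_mulVec, Matrix.dotProduct_mulVec π0 (1 - B - A1 * G), hπ, zero_dotProduct]
    ring
  have h4 : W⁻¹ * Ghat * (L * V1⁻¹) = W⁻¹ * L := by
    rw [Matrix.mul_assoc, ← Matrix.mul_assoc Ghat, hGL, Matrix.mul_nonsing_inv_cancel_right _ _ hVd]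
  rw [h3, hrel, Matrix.mul_assoc (W⁻¹ * Ghat) L, h4, Matrix.mulVec_add, Matrix.mulVec_mulVec, h4,
    dotProduct_add, dotProduct_sub, dotProduct_sub]
  constructor <;> intro h <;> linarith
end

section
/- Let $A_{-1},A_0,A_1,Q$ be $m\times m$ real matrices with $(A_{-1}+A_0-I+A_1)Q=0$, and set $\widetilde A_{-1}=A_{-1}(I-Q)$, $\widetilde A_0=A_0+A_1Q$, $\widetilde A_1=A_1$. Then for every scalar $\lambda$, $\big(A_{-1}+(A_0-I)\lambda+A_1\lambda^2\big)\big((1-\lambda)I-Q\big)=(1-\lambda)\big(\widetilde A_{-1}+(\widetilde A_0-I)\lambda+\widetilde A_1\lambda^2\big)$. -/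
open Matrix

/-- The polynomial identity underlying the right shift technique:
`η(λ)((1-λ)I - Q) = (1-λ) η̃(λ)`, where `η(λ) = A₋₁ + (A₀ - I)λ + A₁λ²`,
`η̃(λ) = Ã₋₁ + (Ã₀ - I)λ + Ã₁λ²`, `Ã₋₁ = A₋₁(I - Q)`, `Ã₀ = A₀ + A₁ Q`,
`Ã₁ = A₁`, given `(A₋₁ + A₀ - I + A₁) Q = 0`. -/
theorem poisson_qbd_right_shift_polynomial {m : ℕ}
    (Am1 A0 A1 Q : Matrix (Fin m) (Fin m) ℝ)
    (hQ : (Am1 + A0 - 1 + A1) * Q = 0) :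
    ∀ lam : ℝ,
      (Am1 + lam • (A0 - 1) + lam ^ 2 • A1) *
          ((1 - lam) • (1 : Matrix (Fin m) (Fin m) ℝ) - Q)
        = (1 - lam) • (Am1 * (1 - Q) + lam • (A0 + A1 * Q - 1) + lam ^ 2 • A1) := by
  intro lam
  have h : A0 * Q = Q - Am1 * Q - A1 * Q := by
    simp only [add_mul, sub_mul, one_mul] at hQ
    rw [← sub_eq_zero, ← hQ]
    abel
  simp only [mul_sub, add_mul, sub_mul, smul_mul_assoc, mul_smul_comm, mul_one, one_mul, h]
  module
end

section
/- Let $A_{-1},A_0,A_1,G,Q$ be $m\times m$ real matrices with $A_{-1}+(A_0-I)G+A_1G^2=0$, $GQ=Q$ and $Q^2=Q$. Then $\widetilde G=G-Q$ satisfies $\widetilde A_{-1}+(\widetilde A_0-I)\widetilde G+\widetilde A_1\widetilde G^2=0$, where $\widetilde A_{-1}=A_{-1}(I-Q)$, $\widetilde A_0=A_0+A_1Q$ and $\widetilde A_1=A_1$. -/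
open Matrix

/-- The algebraic core of the right shift theorem: if `G` solves
`A₋₁ + (A₀ - I)X + A₁X² = 0`, `G Q = Q` and `Q² = Q`, then `G̃ = G - Q` solves
the shifted equation `Ã₋₁ + (Ã₀ - I)X + Ã₁X² = 0` with `Ã₋₁ = A₋₁(I - Q)`,
`Ã₀ = A₀ + A₁ Q`, `Ã₁ = A₁`. -/
theorem poisson_qbd_right_shift_Gtilde {m : ℕ}
    (Am1 A0 A1 G Q : Matrix (Fin m) (Fin m) ℝ)
    (hG : Am1 + (A0 - 1) * G + A1 * G ^ 2 = 0)
    (hGQ : G * Q = Q) (hQ2 : Q ^ 2 = Q) :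
    Am1 * (1 - Q) + (A0 + A1 * Q - 1) * (G - Q) + A1 * (G - Q) ^ 2 = 0 := by
  have hQQ : Q * Q = Q := by rw [← pow_two, hQ2]
  have hGGQ : G ^ 2 * Q = Q := by rw [pow_two, mul_assoc, hGQ, hGQ]
  have h1 : Am1 * Q + (A0 - 1) * Q + A1 * Q = 0 := by
    have h := congrArg (fun X => X * Q) hG
    simpa only [add_mul, mul_assoc, hGQ, hGGQ, zero_mul] using h
  have h2 : (G - Q) ^ 2 = G ^ 2 - Q * G := by
    rw [pow_two, sub_mul, mul_sub, mul_sub, hGQ, hQQ, ← pow_two]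
    abel
  have h3 : A1 * Q * (G - Q) = A1 * (Q * G) - A1 * Q := by
    rw [mul_sub, mul_assoc, mul_assoc, hQQ]
  have h4 : A0 + A1 * Q - 1 = (A0 - 1) + A1 * Q := by abel
  calc Am1 * (1 - Q) + (A0 + A1 * Q - 1) * (G - Q) + A1 * (G - Q) ^ 2
      = (Am1 + (A0 - 1) * G + A1 * G ^ 2) - (Am1 * Q + (A0 - 1) * Q + A1 * Q) := by
        rw [h2, h4, add_mul (A0 - 1), h3, mul_sub (A0 - 1), mul_sub A1, mul_sub Am1, mul_one]
        abel
    _ = 0 := by rw [hG, h1, sub_zero]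
end
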